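/- Let h : ℝ → ℝ and let v : ℝ × ℝ → ℝ be twice continuously differentiable with v_tt(s,y) = −v_xx(s,y) + y^{-2}·h(v(s,y)) for all (s,y) with y ≠ 0. Then the function u(t,x) := v(t/(t² + x²), x/(t² + x²)) satisfies u_tt(t,x) = −u_xx(t,x) + x^{-2}·h(u(t,x)) at every point (t,x) with x ≠ 0. -/

import Mathlib

/-!
Inversion in the unit circle is anticonformal, with conformal factor `1 / (t² + x²)`, so it multiplies
the Laplacian by `1 / (t² + x²)²`. Hence
`u_tt + u_xx = (t² + x²)⁻² (v_tt + v_xx) = (t² + x²)⁻² y⁻² h(u)` with `y = x / (t² + x²)`,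
and the factor `(t² + x²)⁻² y⁻²` is exactly `x⁻²`.

The computation rests on the second-order chain rule along a plane curve (`deriv_deriv_comp`), applied
to the images under inversion of the two coordinate lines. In the sum of the two second derivatives the
mixed partials cancel because the gradients of the two components of the inversion are orthogonal
(so their symmetry plays no role), and the first-order terms cancel because both components are harmonic.
-/

/-- Partial derivative with respect to the first argument. -/
noncomputable def pdt (u : ℝ → ℝ → ℝ) : ℝ → ℝ → ℝ := fun t x => deriv (fun s => u s x) t

/-- Partial derivative with respect to the second argument. -/
noncomputable def pdx (u : ℝ → ℝ → ℝ) : ℝ → ℝ → ℝ := fun t x => deriv (fun y => u t y) x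

lemma pdt_eq_fderiv {w : ℝ → ℝ → ℝ} (hw : Differentiable ℝ fun p : ℝ × ℝ => w p.1 p.2) :
    (fun p : ℝ × ℝ => pdt w p.1 p.2)
      = fun p => fderiv ℝ (fun p : ℝ × ℝ => w p.1 p.2) p (1, 0) := by
  funext p
  exact ((hw p).hasFDerivAt.comp_hasDerivAt p.1
    ((hasDerivAt_id p.1).prodMk (hasDerivAt_const p.1 p.2))).deriv

lemma pdx_eq_fderiv {w : ℝ → ℝ → ℝ} (hw : Differentiable ℝ fun p : ℝ × ℝ => w p.1 p.2) :
    (fun p : ℝ × ℝ => pdx w p.1 p.2)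
      = fun p => fderiv ℝ (fun p : ℝ × ℝ => w p.1 p.2) p (0, 1) := by
  funext p
  exact ((hw p).hasFDerivAt.comp_hasDerivAt p.2
    ((hasDerivAt_const p.2 p.1).prodMk (hasDerivAt_id p.2))).deriv

lemma hasDerivAt_comp_curve {w : ℝ → ℝ → ℝ}
    (hw : Differentiable ℝ fun p : ℝ × ℝ => w p.1 p.2)
    {a b : ℝ → ℝ} {a' b' r : ℝ} (ha : HasDerivAt a a' r) (hb : HasDerivAt b b' r) :
    HasDerivAt (fun s => w (a s) (b s)) (pdt w (a r) (b r) * a' + pdx w (a r) (b r) * b') r := by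
  have hF := (hw (a r, b r)).hasFDerivAt
  have h1 : pdt w (a r) (b r) = fderiv ℝ (fun p : ℝ × ℝ => w p.1 p.2) (a r, b r) (1, 0) :=
    congrFun (pdt_eq_fderiv hw) (a r, b r)
  have h2 : pdx w (a r) (b r) = fderiv ℝ (fun p : ℝ × ℝ => w p.1 p.2) (a r, b r) (0, 1) :=
    congrFun (pdx_eq_fderiv hw) (a r, b r)
  have h3 : HasDerivAt (fun s => w (a s) (b s))
      (fderiv ℝ (fun p : ℝ × ℝ => w p.1 p.2) (a r, b r) (a', b')) r :=
    hF.comp_hasDerivAt (f := fun s => (a s, b s)) r (ha.prodMk hb)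
  have h4 : ((a', b') : ℝ × ℝ) = a' • (1, 0) + b' • (0, 1) := by simp
  rw [h4, map_add, map_smul, map_smul, ← h1, ← h2] at h3
  simpa only [smul_eq_mul, mul_comm] using h3

/-- Second-order chain rule along the plane curve `(a, b)`. -/
lemma deriv_deriv_comp {v : ℝ → ℝ → ℝ} (hv : ContDiff ℝ 2 fun p : ℝ × ℝ => v p.1 p.2)
    {a b a₁ b₁ : ℝ → ℝ} {a₂ b₂ r : ℝ}
    (ha : ∀ᶠ s in nhds r, HasDerivAt a (a₁ s) s) (hb : ∀ᶠ s in nhds r, HasDerivAt b (b₁ s) s)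
    (ha₁ : HasDerivAt a₁ a₂ r) (hb₁ : HasDerivAt b₁ b₂ r) :
    deriv (fun s => deriv (fun s' => v (a s') (b s')) s) r =
      pdt (pdt v) (a r) (b r) * a₁ r ^ 2
        + (pdx (pdt v) (a r) (b r) + pdt (pdx v) (a r) (b r)) * (a₁ r * b₁ r)
        + pdx (pdx v) (a r) (b r) * b₁ r ^ 2
        + pdt v (a r) (b r) * a₂ + pdx v (a r) (b r) * b₂ := by
  have hd : Differentiable ℝ fun p : ℝ × ℝ => v p.1 p.2 := hv.differentiable (by norm_num)
  have hf : Differentiable ℝ (fderiv ℝ fun p : ℝ × ℝ => v p.1 p.2) :=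
    (hv.fderiv_right (m := 1) (by norm_num)).differentiable (by norm_num)
  have hp : Differentiable ℝ fun p : ℝ × ℝ => pdt v p.1 p.2 := by
    rw [pdt_eq_fderiv hd]
    exact hf.clm_apply (differentiable_const _)
  have hq : Differentiable ℝ fun p : ℝ × ℝ => pdx v p.1 p.2 := by
    rw [pdx_eq_fderiv hd]
    exact hf.clm_apply (differentiable_const _)
  have h1 : (fun s => deriv (fun s' => v (a s') (b s')) s) =ᶠ[nhds r]
      fun s => pdt v (a s) (b s) * a₁ s + pdx v (a s) (b s) * b₁ s := by
    filter_upwards [ha, hb] with s h h'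
    exact (hasDerivAt_comp_curve hd h h').deriv
  rw [h1.deriv_eq]
  have ha0 := ha.self_of_nhds
  have hb0 := hb.self_of_nhds
  refine (((hasDerivAt_comp_curve hp ha0 hb0).mul ha₁).add
    ((hasDerivAt_comp_curve hq ha0 hb0).mul hb₁)).deriv.trans ?_
  ring

lemma hasDerivAt_sq_add (c s : ℝ) : HasDerivAt (fun s : ℝ => s ^ 2 + c ^ 2) (2 * s) s := by
  simpa using (hasDerivAt_pow 2 s).add_const (c ^ 2)

lemma hasDerivAt_self_div {c s : ℝ} (h : s ^ 2 + c ^ 2 ≠ 0) :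
    HasDerivAt (fun s : ℝ => s / (s ^ 2 + c ^ 2)) ((c ^ 2 - s ^ 2) / (s ^ 2 + c ^ 2) ^ 2) s := by
  refine ((hasDerivAt_id s).div (hasDerivAt_sq_add c s) h).congr_deriv ?_
  simp only [id]
  ring

lemma hasDerivAt_const_div {c s : ℝ} (h : s ^ 2 + c ^ 2 ≠ 0) :
    HasDerivAt (fun s : ℝ => c / (s ^ 2 + c ^ 2)) (-(2 * s * c) / (s ^ 2 + c ^ 2) ^ 2) s := by
  refine ((hasDerivAt_const s c).div (hasDerivAt_sq_add c s) h).congr_deriv ?_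
  ring

lemma hasDerivAt_self_div₂ {c s : ℝ} (h : s ^ 2 + c ^ 2 ≠ 0) :
    HasDerivAt (fun s : ℝ => (c ^ 2 - s ^ 2) / (s ^ 2 + c ^ 2) ^ 2)
      ((2 * s ^ 3 - 6 * s * c ^ 2) / (s ^ 2 + c ^ 2) ^ 3) s := by
  refine (((hasDerivAt_pow 2 s).const_sub (c ^ 2)).div ((hasDerivAt_sq_add c s).pow 2)
    (pow_ne_zero 2 h)).congr_deriv ?_
  simp only [Pi.pow_apply]
  field_simp
  push_cast
  ring

lemma hasDerivAt_const_div₂ {c s : ℝ} (h : s ^ 2 + c ^ 2 ≠ 0) :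
    HasDerivAt (fun s : ℝ => -(2 * s * c) / (s ^ 2 + c ^ 2) ^ 2)
      ((6 * s ^ 2 * c - 2 * c ^ 3) / (s ^ 2 + c ^ 2) ^ 3) s := by
  refine (((((hasDerivAt_id s).const_mul 2).mul_const c).neg).div ((hasDerivAt_sq_add c s).pow 2)
    (pow_ne_zero 2 h)).congr_deriv ?_
  simp only [Pi.pow_apply, Pi.neg_apply, id]
  field_simp
  push_cast
  ring

theorem admissible_transformation_T6a
    (h : ℝ → ℝ) (v : ℝ → ℝ → ℝ)
    (hv : ContDiff ℝ 2 fun p : ℝ × ℝ => v p.1 p.2)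
    (hvpde : ∀ s y, y ≠ 0 → pdt (pdt v) s y = -pdx (pdx v) s y + (y ^ 2)⁻¹ * h (v s y))
    (u : ℝ → ℝ → ℝ)
    (hu : u = fun t x => v (t / (t ^ 2 + x ^ 2)) (x / (t ^ 2 + x ^ 2))) :
    ∀ t x, x ≠ 0 →
      pdt (pdt u) t x = -pdx (pdx u) t x + (x ^ 2)⁻¹ * h (u t x) := by
  intro t x hx
  have hr : ∀ s y : ℝ, y ≠ 0 → s ^ 2 + y ^ 2 ≠ 0 := fun s y hy => by positivity
  have hr' : ∀ s y : ℝ, y ≠ 0 → y ^ 2 + s ^ 2 ≠ 0 := fun s y hy => by positivity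
  have hne : ∀ᶠ y in nhds x, y ≠ 0 := eventually_ne_nhds hx
  have htt := deriv_deriv_comp hv
    (Filter.Eventually.of_forall fun s => hasDerivAt_self_div (hr s x hx))
    (Filter.Eventually.of_forall fun s => hasDerivAt_const_div (hr s x hx))
    (hasDerivAt_self_div₂ (hr t x hx)) (hasDerivAt_const_div₂ (hr t x hx))
  -- The inversion commutes with swapping coordinates, so the same formulas serve the `x`-direction.
  have hxx := deriv_deriv_comp hv
    (hne.mono fun y hy => hasDerivAt_const_div (hr' t y hy))
    (hne.mono fun y hy => hasDerivAt_self_div (hr' t y hy))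
    (hasDerivAt_const_div₂ (hr' t x hx)) (hasDerivAt_self_div₂ (hr' t x hx))
  simp only [add_comm _ (t ^ 2)] at hxx
  have hpde := hvpde (t / (t ^ 2 + x ^ 2)) (x / (t ^ 2 + x ^ 2)) (div_ne_zero hx (hr t x hx))
  subst hu
  change deriv (fun s => deriv (fun s' => v (s' / (s' ^ 2 + x ^ 2)) (x / (s' ^ 2 + x ^ 2))) s) t =
    -deriv (fun s => deriv (fun s' => v (t / (t ^ 2 + s' ^ 2)) (s' / (t ^ 2 + s' ^ 2))) s) x
      + (x ^ 2)⁻¹ * h (v (t / (t ^ 2 + x ^ 2)) (x / (t ^ 2 + x ^ 2)))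
  rw [htt, hxx, hpde]
  have := hr t x hx
  field_simp
  ring
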